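/- arXiv:1211.2395 — 4 statements merged into one kernel-verified Lean document; each statement's English description precedes it below -/
import Mathlib

section
/- Normalized Wronskian of the series solutions: with C₁, C₂ as defined (in particular c₁₀c₂₀ = (2ν)^{−1}), for every λ ∈ ℂ and every x ≠ a one has C₁(x,λ)C₂′(x,λ) − C₁′(x,λ)C₂(x,λ) = 1, where ′ denotes the derivative with respect to x. -/
open Complex Set Filter MeasureTheory

noncomputable section

/-- The coefficients `c_{jk} = (−1)^k c_{j0} (∏_{s=1}^k ((2s+μ_j)(2s+μ_j−1) − ν₀))⁻¹`. -/
def coefC (ν₀ μ c0 : ℂ) (k : ℕ) : ℂ :=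
  (-1) ^ k * c0 / ∏ s ∈ Finset.range k,
    ((2 * ((s : ℂ) + 1) + μ) * (2 * ((s : ℂ) + 1) + μ - 1) - ν₀)

/-- `C_j(x,λ) = (x−a)^{μ_j} Σ_{k≥0} c_{jk} (ρ(x−a))^{2k}` (written in terms of
`λ = ρ²`), with the branch `z^μ = exp(μ(ln|z| + i arg z))`, `arg z ∈ (−π,π]`. -/
def Cfun (a : ℝ) (ν₀ μ c0 : ℂ) (x : ℝ) (lam : ℂ) : ℂ :=
  ((x : ℂ) - (a : ℂ)) ^ μ *
    ∑' k : ℕ, coefC ν₀ μ c0 k * (lam * ((x : ℂ) - (a : ℂ)) ^ 2) ^ k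

/-- The formal derivative of an entire power series is again entire. -/
theorem summable_norm_derivCoeff_mul_pow {c : ℕ → ℂ}
    (hc : ∀ r : ℝ, Summable fun k => ‖c k‖ * r ^ k) (r : ℝ) :
    Summable fun k : ℕ => ‖((k : ℂ) + 1) * c (k + 1)‖ * r ^ k := by
  have h := (summable_nat_add_iff 1).mpr (hc (2 * (|r| + 1)))
  refine Summable.of_norm_bounded h fun k => ?_
  have hk : ‖(k : ℂ) + 1‖ ≤ 2 ^ (k + 1) := by
    have : ((k + 1 : ℕ) : ℝ) ≤ 2 ^ (k + 1) := by
      exact_mod_cast (Nat.lt_two_pow_self (n := k + 1)).le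
    rw [← Nat.cast_succ, Complex.norm_natCast]
    exact this
  have hr : |r| ^ k ≤ (|r| + 1) ^ (k + 1) :=
    (pow_le_pow_left₀ (abs_nonneg r) (by linarith) k).trans
      (pow_le_pow_right₀ (by linarith [abs_nonneg r]) k.le_succ)
  rw [norm_mul, norm_norm, norm_mul, norm_pow, Real.norm_eq_abs, mul_pow]
  calc ‖(k : ℂ) + 1‖ * ‖c (k + 1)‖ * |r| ^ k
      ≤ 2 ^ (k + 1) * ‖c (k + 1)‖ * (|r| + 1) ^ (k + 1) := by gcongr
    _ = _ := by ring

theorem summable_mul_pow_of_summable_norm {c : ℕ → ℂ}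
    (hc : ∀ r : ℝ, Summable fun k => ‖c k‖ * r ^ k) (w : ℂ) :
    Summable fun k => c k * w ^ k :=
  Summable.of_norm (by simpa [norm_mul, norm_pow] using hc ‖w‖)

/-- Termwise differentiation of an entire power series. -/
theorem hasDerivAt_tsum_mul_pow {c : ℕ → ℂ}
    (hc : ∀ r : ℝ, Summable fun k => ‖c k‖ * r ^ k) (w : ℂ) :
    HasDerivAt (fun z => ∑' k, c k * z ^ k) (∑' k : ℕ, ((k : ℂ) + 1) * c (k + 1) * w ^ k) w := by
  have hd := summable_norm_derivCoeff_mul_pow hc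
  have hu : Summable fun k : ℕ => ‖(k : ℂ) * c k‖ * (‖w‖ + 1) ^ (k - 1) := by
    refine (summable_nat_add_iff 1).mp ?_
    simpa using hd (‖w‖ + 1)
  have key := hasDerivAt_tsum_of_isPreconnected (g := fun k z => c k * z ^ k)
    (g' := fun k z => c k * (k * z ^ (k - 1))) hu Metric.isOpen_ball
    (convex_ball (0 : ℂ) (‖w‖ + 1)).isPreconnected
    (fun k z _ => (hasDerivAt_pow k z).const_mul (c k))
    (fun k z hz => by
      have hz' : ‖z‖ ≤ ‖w‖ + 1 := by simpa using (mem_ball_zero_iff.mp hz).le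
      rw [← mul_assoc, mul_comm (c k), norm_mul, norm_pow]
      gcongr)
    (y₀ := w) (y := w) (by simp) (summable_mul_pow_of_summable_norm hc w) (by simp)
  refine key.congr_deriv ?_
  have hs : Summable fun k : ℕ => c k * ((k : ℂ) * w ^ (k - 1)) := by
    refine (summable_nat_add_iff 1).mp ?_
    refine (summable_mul_pow_of_summable_norm hd w).congr fun k => ?_
    push_cast
    ring
  rw [hs.tsum_eq_zero_add]
  simp only [Nat.cast_zero, zero_mul, mul_zero, zero_add, Nat.add_sub_cancel]
  refine tsum_congr fun k => ?_
  push_cast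
  ring

/-- A sequence satisfying the Bessel recurrence has infinite radius of convergence. -/
theorem summable_norm_of_bessel_recurrence {c : ℕ → ℂ} {κ : ℂ}
    (hrec : ∀ k : ℕ, 4 * ((k : ℂ) + 1) * ((k : ℂ) + 1 + κ) * c (k + 1) = -c k) (r : ℝ) :
    Summable fun k => ‖c k‖ * r ^ k := by
  refine summable_of_ratio_norm_eventually_le (r := 1 / 4) (by norm_num) ?_
  filter_upwards [eventually_ge_atTop ⌈|r| + ‖κ‖⌉₊] with k hk
  have hk' : |r| + ‖κ‖ ≤ k := (Nat.le_ceil _).trans (by exact_mod_cast hk)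
  have h1 : ‖(k : ℂ) + 1‖ = k + 1 := by
    rw [← Nat.cast_succ, Complex.norm_natCast, Nat.cast_succ]
  have h2 : 1 ≤ ‖(k : ℂ) + 1 + κ‖ := by
    have := norm_sub_le_norm_add ((k : ℂ) + 1) κ
    linarith [abs_nonneg r]
  have h3 : |r| ≤ (k : ℝ) + 1 := by linarith [norm_nonneg κ]
  have h4 : 4 * ((k : ℝ) + 1) * ‖(k : ℂ) + 1 + κ‖ * ‖c (k + 1)‖ = ‖c k‖ := by
    have := congrArg norm (hrec k)
    rw [norm_neg, norm_mul, norm_mul, norm_mul, h1] at this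
    simpa using this
  rw [norm_mul, norm_mul, norm_norm, norm_norm, norm_pow, norm_pow, Real.norm_eq_abs, ← h4, pow_succ]
  calc ‖c (k + 1)‖ * (|r| ^ k * |r|) = |r| * 1 * ‖c (k + 1)‖ * |r| ^ k := by ring
    _ ≤ ((k : ℝ) + 1) * ‖(k : ℂ) + 1 + κ‖ * ‖c (k + 1)‖ * |r| ^ k := by gcongr
    _ = _ := by ring

/-- The differential equation `4 (w F'' + (1 + κ) F') = -F` in terms of power series. -/
theorem bessel_recurrence_tsum {c : ℕ → ℂ} {κ : ℂ}
    (hrec : ∀ k : ℕ, 4 * ((k : ℂ) + 1) * ((k : ℂ) + 1 + κ) * c (k + 1) = -c k) (w : ℂ) :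
    4 * (w * ∑' k : ℕ, ((k : ℂ) + 1) * (((k + 1 : ℕ) + 1 : ℂ) * c (k + 1 + 1)) * w ^ k +
      (1 + κ) * ∑' k : ℕ, ((k : ℂ) + 1) * c (k + 1) * w ^ k) = -∑' k, c k * w ^ k := by
  have hc := summable_norm_of_bessel_recurrence hrec
  have hd := summable_norm_derivCoeff_mul_pow hc
  have sd := summable_mul_pow_of_summable_norm hd w
  have se := summable_mul_pow_of_summable_norm (summable_norm_derivCoeff_mul_pow hd) w
  have hshift : ∀ k : ℕ, w * (((k : ℂ) + 1) * (((k + 1 : ℕ) + 1 : ℂ) * c (k + 1 + 1)) * w ^ k) =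
      ((k + 1 : ℕ) : ℂ) * (((k + 1 : ℕ) + 1 : ℂ) * c (k + 1 + 1) * w ^ (k + 1)) := by
    intro k
    push_cast
    ring
  have sk : Summable fun k : ℕ => (k : ℂ) * (((k : ℂ) + 1) * c (k + 1) * w ^ k) :=
    (summable_nat_add_iff 1).mp ((se.mul_left w).congr hshift)
  have hk : w * ∑' k : ℕ, ((k : ℂ) + 1) * (((k + 1 : ℕ) + 1 : ℂ) * c (k + 1 + 1)) * w ^ k =
      ∑' k : ℕ, (k : ℂ) * (((k : ℂ) + 1) * c (k + 1) * w ^ k) := by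
    rw [sk.tsum_eq_zero_add, ← tsum_mul_left, tsum_congr hshift]
    simp
  rw [hk, ← tsum_mul_left, ← sk.tsum_add (sd.mul_left _), ← tsum_mul_left, ← tsum_neg]
  refine tsum_congr fun k => ?_
  linear_combination w ^ k * hrec k

/-- The first integral of the pair of equations with parameters `-ν` and `ν`. -/
theorem bessel_tsum_wronskian {c d : ℕ → ℂ} {ν : ℂ}
    (hc : ∀ k : ℕ, 4 * ((k : ℂ) + 1) * ((k : ℂ) + 1 + -ν) * c (k + 1) = -c k)
    (hd : ∀ k : ℕ, 4 * ((k : ℂ) + 1) * ((k : ℂ) + 1 + ν) * d (k + 1) = -d k) (w : ℂ) :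
    2 * w * ((∑' k, c k * w ^ k) * (∑' k : ℕ, ((k : ℂ) + 1) * d (k + 1) * w ^ k) -
        (∑' k : ℕ, ((k : ℂ) + 1) * c (k + 1) * w ^ k) * (∑' k, d k * w ^ k)) +
      2 * ν * ((∑' k, c k * w ^ k) * (∑' k, d k * w ^ k)) = 2 * ν * (c 0 * d 0) := by
  have sc := summable_norm_of_bessel_recurrence hc
  have sd := summable_norm_of_bessel_recurrence hd
  have hderiv : ∀ z : ℂ, HasDerivAt (fun w : ℂ =>
      2 * w * ((∑' k, c k * w ^ k) * (∑' k : ℕ, ((k : ℂ) + 1) * d (k + 1) * w ^ k) -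
        (∑' k : ℕ, ((k : ℂ) + 1) * c (k + 1) * w ^ k) * (∑' k, d k * w ^ k)) +
      2 * ν * ((∑' k, c k * w ^ k) * (∑' k, d k * w ^ k))) 0 z := by
    intro z
    have c1 := hasDerivAt_tsum_mul_pow sc z
    have d1 := hasDerivAt_tsum_mul_pow sd z
    have c2 := hasDerivAt_tsum_mul_pow (summable_norm_derivCoeff_mul_pow sc) z
    have d2 := hasDerivAt_tsum_mul_pow (summable_norm_derivCoeff_mul_pow sd) z
    have oc := bessel_recurrence_tsum hc z
    have od := bessel_recurrence_tsum hd z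
    refine ((((hasDerivAt_id z).const_mul 2).mul ((c1.mul d2).sub (c2.mul d1))).add
      ((c1.mul d1).const_mul (2 * ν))).congr_deriv ?_
    simp only [id, Pi.mul_apply, Pi.sub_apply]
    linear_combination (1 / 2 * ∑' k, c k * z ^ k) * od - (1 / 2 * ∑' k, d k * z ^ k) * oc
  have hconst := is_const_of_deriv_eq_zero (fun z => (hderiv z).differentiableAt)
    (fun z => (hderiv z).deriv) w 0
  have h0 : ∀ e : ℕ → ℂ, ∑' k, e k * (0 : ℂ) ^ k = e 0 := fun e => by
    rw [tsum_eq_single 0 fun k hk => by simp [hk]]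
    simp
  simpa [h0] using hconst

/-- Away from the origin, `x ↦ x ^ μ` is differentiable along the real line,
including the branch cut. -/
theorem hasDerivAt_ofReal_cpow_div (μ : ℂ) {x : ℝ} (hx : x ≠ 0) :
    HasDerivAt (fun y : ℝ => (y : ℂ) ^ μ) (μ * (x : ℂ) ^ μ / x) x := by
  have hx' : (x : ℂ) ≠ 0 := by exact_mod_cast hx
  rcases eq_or_ne μ 0 with rfl | hμ
  · simpa using hasDerivAt_const x (1 : ℂ)
  · have h := (hasDerivAt_ofReal_cpow_const' hx (r := μ - 1)
      (by simpa [sub_eq_iff_eq_add] using hμ)).const_mul μ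
    rw [cpow_sub _ _ hx', cpow_one, ← mul_div_assoc] at h
    refine h.congr_of_eventuallyEq (Eventually.of_forall fun y => ?_)
    simp only [sub_add_cancel]
    field_simp

theorem coefC_zero (ν₀ μ c0 : ℂ) : coefC ν₀ μ c0 0 = c0 := by simp [coefC]

theorem coefC_recurrence {ν₀ κ c0 : ℂ} (hν₀ : ν₀ = κ ^ 2 - 1 / 4)
    (hκ : ∀ k : ℕ, (k : ℂ) + 1 + κ ≠ 0) (k : ℕ) :
    4 * ((k : ℂ) + 1) * ((k : ℂ) + 1 + κ) * coefC ν₀ (κ + 1 / 2) c0 (k + 1) =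
      -coefC ν₀ (κ + 1 / 2) c0 k := by
  have hfac : ∀ s : ℕ, (2 * ((s : ℂ) + 1) + (κ + 1 / 2)) * (2 * ((s : ℂ) + 1) + (κ + 1 / 2) - 1) -
      ν₀ = 4 * ((s : ℂ) + 1) * ((s : ℂ) + 1 + κ) := by
    intro s
    rw [hν₀]
    ring
  have hne : ∀ s : ℕ, 4 * ((s : ℂ) + 1) * ((s : ℂ) + 1 + κ) ≠ 0 := fun s =>
    mul_ne_zero (mul_ne_zero (by norm_num) (Nat.cast_add_one_ne_zero s)) (hκ s)
  have hprod := Finset.prod_ne_zero_iff.mpr fun s (_ : s ∈ Finset.range k) => hne s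
  simp only [coefC, hfac, Finset.prod_range_succ]
  rw [mul_div_assoc', div_eq_iff (mul_ne_zero hprod (hne k)), pow_succ]
  field_simp

theorem hasDerivAt_Cfun (a : ℝ) {ν₀ μ c0 lam : ℂ}
    (hs : ∀ r : ℝ, Summable fun k => ‖coefC ν₀ μ c0 k‖ * r ^ k) {x : ℝ} (hx : x ≠ a) :
    HasDerivAt (fun t => Cfun a ν₀ μ c0 t lam)
      (μ * ((x : ℂ) - a) ^ μ / ((x : ℂ) - a) *
          (∑' k, coefC ν₀ μ c0 k * (lam * ((x : ℂ) - a) ^ 2) ^ k) +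
        ((x : ℂ) - a) ^ μ *
          ((∑' k : ℕ, ((k : ℂ) + 1) * coefC ν₀ μ c0 (k + 1) * (lam * ((x : ℂ) - a) ^ 2) ^ k) *
            (lam * (2 * ((x : ℂ) - a))))) x := by
  have hp : HasDerivAt (fun t : ℝ => ((t : ℂ) - a) ^ μ)
      (μ * ((x : ℂ) - a) ^ μ / ((x : ℂ) - a)) x := by
    simpa using (hasDerivAt_ofReal_cpow_div μ (sub_ne_zero.mpr hx)).comp_sub_const x a
  have hw : HasDerivAt (fun t : ℝ => lam * ((t : ℂ) - a) ^ 2) (lam * (2 * ((x : ℂ) - a))) x := by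
    simpa using ((((hasDerivAt_id x).ofReal_comp).sub_const (a : ℂ)).pow 2).const_mul lam
  exact hp.mul ((hasDerivAt_tsum_mul_pow hs _).comp x hw)

/-- the normalized Wronskian of the series solutions: with
`μ₁ = −ν + 1/2`, `μ₂ = ν + 1/2` and `c₁₀c₂₀ = (2ν)⁻¹`, one has
`C₁(x,λ)C₂′(x,λ) − C₁′(x,λ)C₂(x,λ) = 1` for every `λ ∈ ℂ` and every `x ≠ a`. -/
theorem series_solutions_unit_wronskian
    (a : ℝ) (ν ν₀ c10 c20 : ℂ)
    (ha : 0 < a)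
    (hν : 0 < ν.re) (hνint : ∀ n : ℕ, 0 < n → ν ≠ (n : ℂ)) (hν₀ : ν₀ = ν ^ 2 - 1 / 4)
    (hc : c10 * c20 = 1 / (2 * ν)) (hc10 : c10 ≠ 0) (hc20 : c20 ≠ 0) :
    ∀ lam : ℂ, ∀ x : ℝ, x ≠ a →
      Cfun a ν₀ (-ν + 1 / 2) c10 x lam *
          deriv (fun t => Cfun a ν₀ (ν + 1 / 2) c20 t lam) x -
        deriv (fun t => Cfun a ν₀ (-ν + 1 / 2) c10 t lam) x *
          Cfun a ν₀ (ν + 1 / 2) c20 x lam = 1 := by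
  intro lam x hx
  have hz : (x : ℂ) - a ≠ 0 := sub_ne_zero.mpr (by exact_mod_cast hx)
  have hν0 : ν ≠ 0 := by
    rintro rfl
    simp at hν
  have r1 := coefC_recurrence (c0 := c10) (κ := -ν) (ν₀ := ν₀) (by rw [hν₀]; ring) fun k h =>
    hνint (k + 1) k.succ_pos (by push_cast; linear_combination -h)
  have r2 := coefC_recurrence (c0 := c20) (κ := ν) hν₀ fun k h => by
    have := congrArg Complex.re h
    simp only [add_re, natCast_re, one_re, zero_re] at this
    linarith [k.cast_nonneg (α := ℝ)]
  have hW := bessel_tsum_wronskian r1 r2 (lam * ((x : ℂ) - a) ^ 2)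
  rw [coefC_zero, coefC_zero, hc, mul_one_div_cancel (mul_ne_zero two_ne_zero hν0)] at hW
  have hpow : ((x : ℂ) - a) ^ (-ν + 1 / 2) * ((x : ℂ) - a) ^ (ν + 1 / 2) = (x : ℂ) - a := by
    rw [← cpow_add _ _ hz]
    ring_nf
    simp
  rw [(hasDerivAt_Cfun a (summable_norm_of_bessel_recurrence r1) hx).deriv,
    (hasDerivAt_Cfun a (summable_norm_of_bessel_recurrence r2) hx).deriv]
  simp only [Cfun]
  generalize (x : ℂ) - a = z at *
  generalize (∑' k, coefC ν₀ (-ν + 1 / 2) c10 k * (lam * z ^ 2) ^ k) = f₁ at *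
  generalize (∑' k, coefC ν₀ (ν + 1 / 2) c20 k * (lam * z ^ 2) ^ k) = f₂ at *
  generalize (∑' k : ℕ, ((k : ℂ) + 1) * coefC ν₀ (-ν + 1 / 2) c10 (k + 1) * (lam * z ^ 2) ^ k) =
    g₁ at *
  generalize (∑' k : ℕ, ((k : ℂ) + 1) * coefC ν₀ (ν + 1 / 2) c20 (k + 1) * (lam * z ^ 2) ^ k) =
    g₂ at *
  generalize z ^ (-ν + 1 / 2) = p at *
  generalize z ^ (ν + 1 / 2) = q at *
  have hfactor : p * f₁ * ((ν + 1 / 2) * q / z * f₂ + q * (g₂ * (lam * (2 * z)))) -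
      ((-ν + 1 / 2) * p / z * f₁ + p * (g₁ * (lam * (2 * z)))) * (q * f₂) =
      p * q / z * (2 * (lam * z ^ 2) * (f₁ * g₂ - g₁ * f₂) + 2 * ν * (f₁ * f₂)) := by
    field_simp
    ring
  rw [hfactor, hW, hpow, mul_one, div_self hz]
end
end

section
/- Estimates for the matrix P: let x ≥ 0 and suppose φ, Φ (for L) and φ̃, Φ̃ (for L̃) satisfy, for λ = ρ² with ρ in a region G_δ ∩ G̃_δ and m = 0,1: |φ^{(m)}(x,λ)| ≤ C|ρ|^{m−1}|e^{−iρx}|, |Φ^{(m)}(x,λ)| ≤ C_δ|ρ|^{m}|e^{iρx}|, |φ^{(m)}(x,λ) − φ̃^{(m)}(x,λ)| ≤ C|ρ|^{m−2}|e^{−iρx}|, |Φ^{(m)}(x,λ) − Φ̃^{(m)}(x,λ)| ≤ C_δ|ρ|^{m−1}|e^{iρx}| (and the same first two bounds for φ̃, Φ̃), together with ⟨Φ̃(·,λ), φ̃(·,λ)⟩ = η(x). Define P_{k1}(x,λ) = −(1/η(x))(φ^{(k−1)}(x,λ)Φ̃′(x,λ) − Φ^{(k−1)}(x,λ)φ̃′(x,λ))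 and P_{k2}(x,λ) = −(1/η(x))(Φ^{(k−1)}(x,λ)φ̃(x,λ) − φ^{(k−1)}(x,λ)Φ̃(x,λ)) for k = 1,2. Then there exists a constant C′ (depending on δ) such that for all large |ρ| with ρ ∈ G_δ ∩ G̃_δ and all x ≥ 0: |P_{11}(x,λ) − 1| ≤ C′/|ρ|, |P_{12}(x,λ)| ≤ C′/|ρ|, |P_{22}(x,λ) − 1| ≤ C′/|ρ|, and |P_{21}(x,λ)| ≤ C′. -/
open Complex Set Filter MeasureTheory

noncomputable section

/-- The Wronskian `⟨y,z⟩ = y z′ − y′ z`. -/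
def Wr (y z : ℝ → ℂ) (x : ℝ) : ℂ := y x * deriv z x - deriv y x * z x

/-- `η(x) = 1` on `J₋` and `η(x) = det A` on `J₊`. -/
def etaF (a : ℝ) (detA : ℂ) (x : ℝ) : ℂ := if x < a then 1 else detA

theorem norm_mul_le_of_exp_bounds {u v : ℂ} {A B t : ℝ}
    (hu : ‖u‖ ≤ A * Real.exp t) (hv : ‖v‖ ≤ B * Real.exp (-t)) : ‖u * v‖ ≤ A * B := by
  calc ‖u * v‖ = ‖u‖ * ‖v‖ := norm_mul u v
    _ ≤ (A * Real.exp t) * (B * Real.exp (-t)) :=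
        mul_le_mul hu hv (norm_nonneg v) ((norm_nonneg u).trans hu)
    _ = A * B * (Real.exp t * Real.exp (-t)) := by ring
    _ = A * B := by rw [← Real.exp_add, add_neg_cancel, Real.exp_zero, mul_one]

theorem etaF_ne_zero {a : ℝ} {detA : ℂ} (hdetA : detA ≠ 0) (x : ℝ) : etaF a detA x ≠ 0 := by
  unfold etaF
  split_ifs
  · exact one_ne_zero
  · exact hdetA

theorem norm_one_div_etaF_le (a : ℝ) (detA : ℂ) (x : ℝ) :
    ‖1 / etaF a detA x‖ ≤ 1 + ‖detA‖⁻¹ := by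
  unfold etaF
  split_ifs <;> simp

theorem norm_neg_mul_sub_le {c p q : ℂ} {K N : ℝ} (hc : ‖c‖ ≤ K) (hp : ‖p‖ ≤ N) (hq : ‖q‖ ≤ N) :
    ‖-c * (p - q)‖ ≤ K * (2 * N) := by
  rw [norm_mul, norm_neg]
  exact mul_le_mul hc ((norm_sub_le p q).trans (by linarith)) (norm_nonneg _)
    ((norm_nonneg c).trans hc)

/-- estimates for the matrix `P`: with
`P_{k1} = −(1/η)(φ^{(k−1)}Φ̃′ − Φ^{(k−1)}φ̃′)`,
`P_{k2} = −(1/η)(Φ^{(k−1)}φ̃ − φ^{(k−1)}Φ̃)`,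
one has `P_{11} − 1, P_{12}, P_{22} − 1 = O(ρ⁻¹)` and `P_{21} = O(1)` uniformly in
`x ≥ 0` for large `|ρ|`, `ρ ∈ G_δ ∩ G̃_δ`. -/
theorem P_matrix_estimates
    (a δ : ℝ) (detA : ℂ) (φ Φ φt Φt : ℝ → ℂ → ℂ) (Λ Λt : Set ℂ) (C Cδ : ℝ)
    (ha : 0 < a) (hδ : 0 < δ) (hdetA : detA ≠ 0)
    -- the Wronskian identity ⟨Φ̃(·,λ), φ̃(·,λ)⟩ = η(x)
    (hWr : ∀ ρ lam : ℂ, ρ ^ 2 = lam → 0 ≤ ρ.im →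
      (∀ σ ∈ Λ, δ ≤ ‖ρ - σ‖) → (∀ σ ∈ Λt, δ ≤ ‖ρ - σ‖) →
      ∀ x : ℝ, 0 ≤ x → Wr (fun t => Φt t lam) (fun t => φt t lam) x = etaF a detA x)
    -- the standard estimates for φ, Φ, φ̃, Φ̃ on G_δ ∩ G̃_δ
    (hest : ∀ ρ lam : ℂ, ρ ^ 2 = lam → 0 ≤ ρ.im →
      (∀ σ ∈ Λ, δ ≤ ‖ρ - σ‖) → (∀ σ ∈ Λt, δ ≤ ‖ρ - σ‖) →
      ∀ x : ℝ, 0 ≤ x →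
      ‖φ x lam‖ ≤ C * ‖ρ‖⁻¹ * Real.exp (ρ.im * x) ∧
      ‖deriv (fun t => φ t lam) x‖ ≤ C * Real.exp (ρ.im * x) ∧
      ‖φt x lam‖ ≤ C * ‖ρ‖⁻¹ * Real.exp (ρ.im * x) ∧
      ‖deriv (fun t => φt t lam) x‖ ≤ C * Real.exp (ρ.im * x) ∧
      ‖Φ x lam‖ ≤ Cδ * Real.exp (-(ρ.im * x)) ∧
      ‖deriv (fun t => Φ t lam) x‖ ≤ Cδ * ‖ρ‖ * Real.exp (-(ρ.im * x)) ∧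
      ‖Φt x lam‖ ≤ Cδ * Real.exp (-(ρ.im * x)) ∧
      ‖deriv (fun t => Φt t lam) x‖ ≤ Cδ * ‖ρ‖ * Real.exp (-(ρ.im * x)))
    -- and the difference estimates
    (hdiff : ∀ ρ lam : ℂ, ρ ^ 2 = lam → 0 ≤ ρ.im →
      (∀ σ ∈ Λ, δ ≤ ‖ρ - σ‖) → (∀ σ ∈ Λt, δ ≤ ‖ρ - σ‖) →
      ∀ x : ℝ, 0 ≤ x →
      ‖φ x lam - φt x lam‖ ≤ C * (‖ρ‖⁻¹) ^ 2 * Real.exp (ρ.im * x) ∧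
      ‖deriv (fun t => φ t lam) x - deriv (fun t => φt t lam) x‖ ≤
        C * ‖ρ‖⁻¹ * Real.exp (ρ.im * x) ∧
      ‖Φ x lam - Φt x lam‖ ≤ Cδ * ‖ρ‖⁻¹ * Real.exp (-(ρ.im * x)) ∧
      ‖deriv (fun t => Φ t lam) x - deriv (fun t => Φt t lam) x‖ ≤
        Cδ * Real.exp (-(ρ.im * x))) :
    ∃ C' R : ℝ, 0 < C' ∧ ∀ ρ lam : ℂ, ρ ^ 2 = lam → 0 ≤ ρ.im →
      (∀ σ ∈ Λ, δ ≤ ‖ρ - σ‖) → (∀ σ ∈ Λt, δ ≤ ‖ρ - σ‖) → R ≤ ‖ρ‖ →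
      ∀ x : ℝ, 0 ≤ x →
      -- ‖P₁₁ − 1‖ ≤ C′/‖ρ‖
      ‖-(1 / etaF a detA x) *
          (φ x lam * deriv (fun t => Φt t lam) x -
            Φ x lam * deriv (fun t => φt t lam) x) - 1‖ ≤ C' / ‖ρ‖ ∧
      -- ‖P₁₂‖ ≤ C′/‖ρ‖
      ‖-(1 / etaF a detA x) * (Φ x lam * φt x lam - φ x lam * Φt x lam)‖ ≤ C' / ‖ρ‖ ∧
      -- ‖P₂₂ − 1‖ ≤ C′/‖ρ‖
      ‖-(1 / etaF a detA x) *
          (deriv (fun t => Φ t lam) x * φt x lam -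
            deriv (fun t => φ t lam) x * Φt x lam) - 1‖ ≤ C' / ‖ρ‖ ∧
      -- ‖P₂₁‖ ≤ C′
      ‖-(1 / etaF a detA x) *
          (deriv (fun t => φ t lam) x * deriv (fun t => Φt t lam) x -
            deriv (fun t => Φ t lam) x * deriv (fun t => φt t lam) x)‖ ≤ C' := by
  refine ⟨(1 + ‖detA‖⁻¹) * (2 * |C * Cδ|) + 1, 1, by positivity, ?_⟩
  intro ρ lam hlam him hΛ hΛt hρ x hx
  have hW := hWr ρ lam hlam him hΛ hΛt x hx
  obtain ⟨hφ, -, hφt, hφt', hΦ, -, hΦt, hΦt'⟩ := hest ρ lam hlam him hΛ hΛt x hx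
  obtain ⟨dφ, dφ', dΦ, dΦ'⟩ := hdiff ρ lam hlam him hΛ hΛt x hx
  have hη := etaF_ne_zero (a := a) hdetA x
  have hK := norm_one_div_etaF_le a detA x
  simp only [Wr] at hW
  generalize etaF a detA x = η at *
  generalize deriv (fun t => φ t lam) x = φ' at *
  generalize deriv (fun t => Φ t lam) x = Φ' at *
  generalize deriv (fun t => φt t lam) x = φt' at *
  generalize deriv (fun t => Φt t lam) x = Φt' at *
  have hr : 0 < ‖ρ‖ := one_pos.trans_le hρ
  have hr0 : ‖ρ‖ ≠ 0 := hr.ne'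
  have hN : C * Cδ * ‖ρ‖⁻¹ ≤ |C * Cδ| * ‖ρ‖⁻¹ :=
    mul_le_mul_of_nonneg_right (le_abs_self _) (inv_nonneg.2 hr.le)
  have decay : ∀ {p q : ℂ}, ‖p‖ ≤ C * Cδ * ‖ρ‖⁻¹ → ‖q‖ ≤ C * Cδ * ‖ρ‖⁻¹ →
      ‖-(1 / η) * (p - q)‖ ≤ ((1 + ‖detA‖⁻¹) * (2 * |C * Cδ|) + 1) / ‖ρ‖ := by
    intro p q hp hq
    refine (norm_neg_mul_sub_le hK (hp.trans hN) (hq.trans hN)).trans ?_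
    rw [div_eq_mul_inv]
    linarith [inv_pos.2 hr]
  refine ⟨?_, ?_, ?_, ?_⟩
  · have e : -(1 / η) * (φ x lam * Φt' - Φ x lam * φt') - 1 =
        -(1 / η) * ((φ x lam - φt x lam) * Φt' - φt' * (Φ x lam - Φt x lam)) := by
      field_simp
      linear_combination hW
    rw [e]
    refine decay ((norm_mul_le_of_exp_bounds dφ hΦt').trans_eq ?_)
      ((norm_mul_le_of_exp_bounds hφt' dΦ).trans_eq ?_)
    · field_simp
    · ring
  · rw [mul_comm (Φ x lam)]
    exact decay ((norm_mul_le_of_exp_bounds hφt hΦ).trans_eq (by ring))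
      ((norm_mul_le_of_exp_bounds hφ hΦt).trans_eq (by ring))
  · have e : -(1 / η) * (Φ' * φt x lam - φ' * Φt x lam) - 1 =
        -(1 / η) * (φt x lam * (Φ' - Φt') - (φ' - φt') * Φt x lam) := by
      field_simp
      linear_combination hW
    rw [e]
    exact decay ((norm_mul_le_of_exp_bounds hφt dΦ').trans_eq (by ring))
      ((norm_mul_le_of_exp_bounds dφ' hΦt).trans_eq (by ring))
  · have e : φ' * Φt' - Φ' * φt' = (φ' - φt') * Φt' - φt' * (Φ' - Φt') := by ring
    rw [e]
    have hp : ‖(φ' - φt') * Φt'‖ ≤ |C * Cδ| := by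
      refine (norm_mul_le_of_exp_bounds dφ' hΦt').trans ((le_of_eq ?_).trans (le_abs_self _))
      field_simp
    have hq : ‖φt' * (Φ' - Φt')‖ ≤ |C * Cδ| :=
      (norm_mul_le_of_exp_bounds hφt' dΦ').trans (le_abs_self _)
    linarith [norm_neg_mul_sub_le hK hp hq]
end
end

section
/- Cauchy integral representation on the parabolic contour: let h > 0, let γ be the parabola {λ = u + iv : u = v²/(4h²) − h²} in the complex λ-plane (the image of the line {Im ρ = h} under λ = ρ², suitably oriented), and let J_γ = {λ : λ ∉ γ ∪ int γ} be its exterior. Suppose F is analytic on an open set containing J_γ ∪ γ and F(λ) = O(|λ|^{−1}) as |λ| → ∞. Then for every λ ∈ J_γ one has F(λ) = (1/(2πi)) ∫_γ F(μ)/(λ − μ) dμ, where the integral is understood as the principal value lim_{R→∞} ∫_{γ_R} over truncations γ_R of γ. -/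
open Complex Set Filter MeasureTheory

noncomputable section

/-- Principal value of the contour integral `∫_γ F(μ) dμ` over the parabola
`γ = {λ = u+iv : u = v²/(4h²) − h²}` (the image of `{Im ρ = h}` under `λ = ρ²`),
oriented as in the paper (counterclockwise around the interior region `int γ`):
`PVGamma h F J` means `lim_{R→∞} ∫_{γ_R} F(μ) dμ = J`. -/
def PVGamma (h : ℝ) (F : ℂ → ℂ) (J : ℂ) : Prop :=
  Tendsto (fun R : ℝ => ∫ t in (-R)..R,
      F (((t : ℂ) + Complex.I * (h : ℂ)) ^ 2) * (-2 * ((t : ℂ) + Complex.I * (h : ℂ))))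
    atTop (nhds J)

/-- The exterior `J_γ = {λ : λ ∉ γ ∪ int γ}` of the parabola `γ`. -/
def JGamma (h : ℝ) : Set ℂ := {lam : ℂ | lam.re < lam.im ^ 2 / (4 * h ^ 2) - h ^ 2}

/-- The closed exterior `J_γ ∪ γ` of the parabola `γ`. -/
def ExtGamma (h : ℝ) : Set ℂ := {lam : ℂ | lam.re ≤ lam.im ^ 2 / (4 * h ^ 2) - h ^ 2}

/-- If `f` is holomorphic on the closed half-plane `{h ≤ Im ρ}` and is `O(|ρ|⁻²)` there, its
integral over the boundary line vanishes. -/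
theorem tendsto_integral_line_zero_of_decay {h : ℝ} (hh : 0 < h) {f : ℂ → ℂ} {K R₀ : ℝ}
    (hf : DifferentiableOn ℂ f {ρ : ℂ | h ≤ ρ.im})
    (hK : ∀ ρ : ℂ, h ≤ ρ.im → R₀ ≤ ‖ρ‖ → ‖f ρ‖ ≤ K / ‖ρ‖ ^ 2) :
    Tendsto (fun R : ℝ => ∫ t in (-R)..R, f ((t : ℂ) + Complex.I * (h : ℂ))) atTop (nhds 0) := by
  have hlim : Tendsto (fun R : ℝ => 4 * |K| * R⁻¹) atTop (nhds 0) := by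
    simpa using tendsto_inv_atTop_zero.const_mul (4 * |K|)
  refine squeeze_zero_norm' ?_ hlim
  filter_upwards [eventually_ge_atTop R₀, eventually_gt_atTop 0] with R hR₀ hR
  have hbound : ∀ ρ : ℂ, h ≤ ρ.im → R ≤ ‖ρ‖ → ‖f ρ‖ ≤ |K| / R ^ 2 := fun ρ him hnorm =>
    (hK ρ him (hR₀.trans hnorm)).trans (by gcongr; exact le_abs_self K)
  have hrect := Complex.integral_boundary_rect_eq_zero_of_differentiableOn f
    (⟨-R, h⟩ : ℂ) (⟨R, h + R⟩ : ℂ) (hf.mono fun ρ hρ => by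
      have := (Complex.mem_reProdIm.1 hρ).2
      rw [uIcc_of_le (by simp [hR.le])] at this
      exact this.1)
  simp only [smul_eq_mul] at hrect
  have htop : ‖∫ t in (-R)..R, f ((t : ℂ) + ((h + R : ℝ) : ℂ) * Complex.I)‖
      ≤ |K| / R ^ 2 * |R - -R| := by
    refine intervalIntegral.norm_integral_le_of_norm_le_const fun t _ => hbound _ ?_ ?_
    · simp [hR.le]
    · refine le_trans ?_ (Complex.abs_im_le_norm _)
      simpa using (le_add_of_nonneg_left hh.le).trans (le_abs_self (h + R))
  have hside : ∀ s : ℝ, |s| = R →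
      ‖∫ y in h..(h + R), f ((s : ℂ) + (y : ℂ) * Complex.I)‖ ≤ |K| / R ^ 2 * |h + R - h| := by
    intro s hs
    refine intervalIntegral.norm_integral_le_of_norm_le_const fun y hy => hbound _ ?_ ?_
    · rw [uIoc_of_le (by linarith)] at hy
      simpa using hy.1.le
    · refine le_trans ?_ (Complex.abs_re_le_norm _)
      simp [hs]
  have hright := hside R (abs_of_pos hR)
  have hleft := hside (-R) (by rw [abs_neg, abs_of_pos hR])
  rw [show R - -R = 2 * R by ring, abs_of_pos (mul_pos two_pos hR)] at htop
  rw [add_sub_cancel_left, abs_of_pos hR] at hright hleft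
  have hbottom : ∫ t in (-R)..R, f ((t : ℂ) + Complex.I * (h : ℂ))
      = (∫ t in (-R)..R, f ((t : ℂ) + ((h + R : ℝ) : ℂ) * Complex.I))
        - Complex.I * (∫ y in h..(h + R), f ((R : ℂ) + (y : ℂ) * Complex.I))
        + Complex.I * (∫ y in h..(h + R), f (((-R : ℝ) : ℂ) + (y : ℂ) * Complex.I)) := by
    simp only [mul_comm Complex.I (h : ℂ)]
    linear_combination hrect
  rw [hbottom]
  calc _ ≤ |K| / R ^ 2 * (2 * R) + |K| / R ^ 2 * R + |K| / R ^ 2 * R := by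
        refine (norm_add_le _ _).trans (add_le_add ((norm_sub_le _ _).trans
          (add_le_add htop ?_)) ?_)
        · simpa using hright
        · simpa using hleft
    _ = 4 * |K| * R⁻¹ := by field_simp; ring

/-- The integral of the Cauchy kernel of a point above the line `{Im ρ = h}`, corrected by that of
the reflected point so as to be integrable at infinity, is `2πi`. -/
theorem tendsto_integral_cauchy_kernel_sub_reflection {h : ℝ} {z : ℂ} (hz : h < z.im) :
    Tendsto (fun R : ℝ => ∫ t in (-R)..R, (((t : ℂ) + Complex.I * (h : ℂ) - z)⁻¹
        - ((t : ℂ) + Complex.I * (h : ℂ) - ⟨z.re, 2 * h - z.im⟩)⁻¹))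
      atTop (nhds (2 * (Real.pi : ℂ) * Complex.I)) := by
  set b : ℝ := z.im - h with hb_def
  have hb : 0 < b := sub_pos.2 hz
  have hkernel : ∀ t : ℝ, ((t : ℂ) + Complex.I * (h : ℂ) - z)⁻¹
        - ((t : ℂ) + Complex.I * (h : ℂ) - ⟨z.re, 2 * h - z.im⟩)⁻¹
      = 2 * Complex.I * ((b⁻¹ * (1 + (t / b - z.re / b) ^ 2)⁻¹ : ℝ) : ℂ) := by
    intro t
    have hz' : (t : ℂ) + Complex.I * (h : ℂ) - z = ((t - z.re : ℝ) : ℂ) - b * Complex.I := by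
      apply Complex.ext <;> simp [hb_def]
    have hw' : (t : ℂ) + Complex.I * (h : ℂ) - ⟨z.re, 2 * h - z.im⟩
        = ((t - z.re : ℝ) : ℂ) + b * Complex.I := by
      apply Complex.ext <;> simp [hb_def]
      ring
    have hne₁ : ((t - z.re : ℝ) : ℂ) - b * Complex.I ≠ 0 := fun h0 => hb.ne' (by
      simpa using congrArg Complex.im h0)
    have hne₂ : ((t - z.re : ℝ) : ℂ) + b * Complex.I ≠ 0 := fun h0 => hb.ne' (by
      simpa using congrArg Complex.im h0)
    have hreal : b⁻¹ * (1 + (t / b - z.re / b) ^ 2)⁻¹ = b / ((t - z.re) ^ 2 + b ^ 2) := by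
      have : (t - z.re) ^ 2 + b ^ 2 ≠ 0 := by positivity
      have : b ^ 2 + (t - z.re) ^ 2 ≠ 0 := by positivity
      field_simp
      ring
    have hprod : (((t - z.re) ^ 2 + b ^ 2 : ℝ) : ℂ)
        = (((t - z.re : ℝ) : ℂ) - b * Complex.I) * (((t - z.re : ℝ) : ℂ) + b * Complex.I) := by
      push_cast
      linear_combination (b : ℂ) ^ 2 * Complex.I_sq
    rw [hz', hw', hreal, Complex.ofReal_div, hprod, inv_sub_inv hne₁ hne₂]
    ring
  have hint : ∀ R : ℝ, ∫ t in (-R)..R, (((t : ℂ) + Complex.I * (h : ℂ) - z)⁻¹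
        - ((t : ℂ) + Complex.I * (h : ℂ) - ⟨z.re, 2 * h - z.im⟩)⁻¹)
      = 2 * Complex.I * ((Real.arctan (R / b - z.re / b)
          - Real.arctan (-R / b - z.re / b) : ℝ) : ℂ) := by
    intro R
    simp only [hkernel]
    rw [intervalIntegral.integral_const_mul, intervalIntegral.integral_ofReal,
      intervalIntegral.integral_const_mul,
      intervalIntegral.integral_comp_div_sub (fun x => (1 + x ^ 2)⁻¹) hb.ne',
      integral_inv_one_add_sq, smul_eq_mul, inv_mul_cancel_left₀ hb.ne']
  simp only [hint]
  have hpos : Tendsto (fun R : ℝ => R / b - z.re / b) atTop atTop :=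
    tendsto_atTop_add_const_right _ _ (tendsto_id.atTop_div_const hb)
  have hneg : Tendsto (fun R : ℝ => -R / b - z.re / b) atTop atBot :=
    tendsto_atBot_add_const_right _ _ (tendsto_neg_atTop_atBot.atBot_div_const hb)
  have harctan := ((Real.tendsto_arctan_atTop.mono_right nhdsWithin_le_nhds).comp hpos).sub
    ((Real.tendsto_arctan_atBot.mono_right nhdsWithin_le_nhds).comp hneg)
  have := ((Complex.continuous_ofReal.tendsto _).comp harctan).const_mul (2 * Complex.I)
  rwa [show 2 * Complex.I * ((Real.pi / 2 - -(Real.pi / 2) : ℝ) : ℂ)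
    = 2 * (Real.pi : ℂ) * Complex.I by push_cast; ring] at this

theorem parabola_defect_sq {h : ℝ} (hh : 0 < h) (ρ : ℂ) :
    (ρ ^ 2).im ^ 2 / (4 * h ^ 2) - h ^ 2 - (ρ ^ 2).re
      = (ρ.im ^ 2 - h ^ 2) * ((ρ.re ^ 2 + h ^ 2) / h ^ 2) := by
  simp only [sq ρ, Complex.mul_re, Complex.mul_im]
  field_simp
  ring

theorem sq_mem_extGamma_iff {h : ℝ} (hh : 0 < h) (ρ : ℂ) :
    ρ ^ 2 ∈ ExtGamma h ↔ h ^ 2 ≤ ρ.im ^ 2 := by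
  rw [ExtGamma, mem_ofPred_eq, ← sub_nonneg, parabola_defect_sq hh,
    mul_nonneg_iff_of_pos_right (by positivity), sub_nonneg]

theorem sq_mem_jGamma_iff {h : ℝ} (hh : 0 < h) (ρ : ℂ) :
    ρ ^ 2 ∈ JGamma h ↔ h ^ 2 < ρ.im ^ 2 := by
  rw [JGamma, mem_ofPred_eq, ← sub_pos, parabola_defect_sq hh,
    mul_pos_iff_of_pos_right (by positivity), sub_pos]

/-- The squaring map sends the half-plane `{h < Im ρ}` onto the exterior of the parabola. -/
theorem exists_sq_eq_of_mem_jGamma {h : ℝ} (hh : 0 < h) {lam : ℂ} (hlam : lam ∈ JGamma h) :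
    ∃ z : ℂ, z ^ 2 = lam ∧ h < z.im := by
  obtain ⟨z, rfl⟩ := IsAlgClosed.exists_pow_nat_eq lam two_pos
  rcases lt_abs.1 ((abs_of_pos hh).symm.trans_lt (sq_lt_sq.1 ((sq_mem_jGamma_iff hh z).1 hlam)))
    with hz | hz
  · exact ⟨z, rfl, hz⟩
  · exact ⟨-z, neg_sq z, by simpa using hz⟩

theorem half_norm_le_norm_sub {ρ z : ℂ} (hz : 2 * ‖z‖ ≤ ‖ρ‖) : ‖ρ‖ / 2 ≤ ‖ρ - z‖ := by
  linarith [norm_sub_norm_le ρ z]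

/-- Cauchy integral representation on the parabolic contour: if `F` is
analytic on an open set containing `J_γ ∪ γ` and `F(λ) = O(|λ|⁻¹)` as `|λ| → ∞`, then
`F(λ) = (1/(2πi)) ∫_γ F(μ)/(λ − μ) dμ` for every `λ ∈ J_γ`, the integral being a
principal value. -/
theorem cauchy_representation_on_parabolic_contour
    (h : ℝ) (F : ℂ → ℂ)
    (hh : 0 < h)
    (hF : ∃ U : Set ℂ, IsOpen U ∧ ExtGamma h ⊆ U ∧ DifferentiableOn ℂ F U)
    (hdecay : ∃ C R : ℝ, ∀ lam ∈ ExtGamma h, R ≤ ‖lam‖ → ‖F lam‖ ≤ C / ‖lam‖) :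
    ∀ lam ∈ JGamma h,
      PVGamma h (fun μ => F μ / (lam - μ)) (2 * (Real.pi : ℂ) * Complex.I * F lam) := by
  rintro lam hlam
  obtain ⟨U, hU, hExt, hFU⟩ := hF
  obtain ⟨C, R₀, hC⟩ := hdecay
  obtain ⟨z, rfl, hz⟩ := exists_sq_eq_of_mem_jGamma hh hlam
  set w : ℂ := ⟨z.re, 2 * h - z.im⟩ with hw_def
  have hsq : ∀ ρ : ℂ, h ≤ ρ.im → ρ ^ 2 ∈ ExtGamma h := fun ρ hρ =>
    (sq_mem_extGamma_iff hh ρ).2 (by gcongr)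
  have hadd : ∀ ρ : ℂ, 0 < ρ.im → ρ + z ≠ 0 := fun ρ hρ h0 => by
    have := congrArg Complex.im h0
    simp only [Complex.add_im, Complex.zero_im] at this
    linarith
  have hsub_w : ∀ ρ : ℂ, h ≤ ρ.im → ρ - w ≠ 0 := fun ρ hρ h0 => by
    have := congrArg Complex.im h0
    simp only [Complex.sub_im, Complex.zero_im, hw_def] at this
    linarith
  have hz0 : z ≠ 0 := fun h0 => by simp [h0] at hz; linarith
  set g : ℂ → ℂ := fun ρ => 2 * ρ / (ρ + z) * F (ρ ^ 2) with hg_def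
  have hgz : g z = F (z ^ 2) := by
    simp only [hg_def]
    rw [← two_mul, div_self (by simpa using hz0), one_mul]
  set V : Set ℂ := {ρ : ℂ | ρ ^ 2 ∈ U} ∩ {ρ : ℂ | 0 < ρ.im} with hV_def
  have hV : IsOpen V := (hU.preimage (continuous_pow 2)).inter
    (isOpen_lt continuous_const Complex.continuous_im)
  have hSV : {ρ : ℂ | h ≤ ρ.im} ⊆ V := fun ρ hρ => ⟨hExt (hsq ρ hρ), hh.trans_le hρ⟩
  have hgV : DifferentiableOn ℂ g V := by
    refine DifferentiableOn.mul (DifferentiableOn.div (by fun_prop) (by fun_prop)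
      fun ρ hρ => hadd ρ hρ.2) ?_
    exact hFU.comp (by fun_prop) fun ρ hρ => hρ.1
  set f : ℂ → ℂ := fun ρ => dslope g z ρ + g z * (ρ - w)⁻¹ with hf_def
  have hf : DifferentiableOn ℂ f {ρ : ℂ | h ≤ ρ.im} := by
    refine DifferentiableOn.add (((Complex.differentiableOn_dslope
      (hV.mem_nhds (hSV hz.le))).2 hgV).mono hSV) ?_
    exact (differentiableOn_const _).mul
      (DifferentiableOn.inv (by fun_prop) fun ρ hρ => hsub_w ρ hρ)
  have hf_eq : ∀ ρ : ℂ, ρ ≠ z →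
      f ρ = g ρ * (ρ - z)⁻¹ - g z * ((ρ - z)⁻¹ - (ρ - w)⁻¹) := by
    intro ρ hρ
    simp only [hf_def, dslope_of_ne _ hρ, slope_def_field]
    ring
  have hdecay_f : ∀ ρ : ℂ, h ≤ ρ.im → max (max R₀ 1) (max (2 * ‖z‖) (2 * ‖w‖)) ≤ ‖ρ‖ →
      ‖f ρ‖ ≤ (8 * |C| + 4 * (‖g z‖ * ‖z - w‖)) / ‖ρ‖ ^ 2 := by
    intro ρ him hρ
    simp only [max_le_iff] at hρ
    obtain ⟨⟨hρR, hρ1⟩, hρz, hρw⟩ := hρ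
    have hpos : 0 < ‖ρ‖ := by linarith
    have hnz := half_norm_le_norm_sub hρz
    have hnw := half_norm_le_norm_sub hρw
    have hnz' : ‖ρ‖ / 2 ≤ ‖ρ + z‖ := by
      simpa using half_norm_le_norm_sub (z := -z) (by simpa using hρz)
    have hρz_ne : ρ - z ≠ 0 := norm_pos_iff.1 (by linarith)
    have hFρ : ‖F (ρ ^ 2)‖ ≤ |C| / ‖ρ‖ ^ 2 := by
      rw [← norm_pow]
      refine (hC _ (hsq ρ him) ?_).trans (by gcongr; exact le_abs_self C)
      rw [norm_pow]
      nlinarith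
    rw [hf_eq ρ (sub_ne_zero.1 hρz_ne), inv_sub_inv hρz_ne (hsub_w ρ him), sub_sub_sub_cancel_left]
    have hfirst : ‖g ρ * (ρ - z)⁻¹‖ ≤ 8 * |C| / ‖ρ‖ ^ 2 := by
      simp only [hg_def, norm_mul, norm_div, norm_inv, Complex.norm_ofNat]
      calc 2 * ‖ρ‖ / ‖ρ + z‖ * ‖F (ρ ^ 2)‖ * ‖ρ - z‖⁻¹
          ≤ 2 * ‖ρ‖ / (‖ρ‖ / 2) * (|C| / ‖ρ‖ ^ 2) * (‖ρ‖ / 2)⁻¹ := by gcongr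
        _ = 8 * |C| / ‖ρ‖ ^ 2 * ‖ρ‖⁻¹ := by field_simp; ring
        _ ≤ 8 * |C| / ‖ρ‖ ^ 2 := mul_le_of_le_one_right (by positivity) (inv_le_one_of_one_le₀ hρ1)
    have hsecond : ‖g z * ((z - w) / ((ρ - z) * (ρ - w)))‖
        ≤ 4 * (‖g z‖ * ‖z - w‖) / ‖ρ‖ ^ 2 := by
      simp only [norm_mul, norm_div]
      calc ‖g z‖ * (‖z - w‖ / (‖ρ - z‖ * ‖ρ - w‖))
          ≤ ‖g z‖ * (‖z - w‖ / ((‖ρ‖ / 2) * (‖ρ‖ / 2))) := by gcongr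
        _ = 4 * (‖g z‖ * ‖z - w‖) / ‖ρ‖ ^ 2 := by field_simp; ring
    rw [add_div]
    exact (norm_sub_le _ _).trans (add_le_add hfirst hsecond)
  have hline : Continuous fun t : ℝ => (t : ℂ) + Complex.I * (h : ℂ) := by fun_prop
  have him : ∀ t : ℝ, ((t : ℂ) + Complex.I * (h : ℂ)).im = h := by simp
  have hne : ∀ t : ℝ, (t : ℂ) + Complex.I * (h : ℂ) - z ≠ 0 := fun t h0 => by
    have := congrArg Complex.im h0
    rw [Complex.sub_im, him, Complex.zero_im] at this
    linarith
  have hlim := (tendsto_integral_line_zero_of_decay hh hf hdecay_f).add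
    ((tendsto_integral_cauchy_kernel_sub_reflection hz).const_mul (g z))
  rw [zero_add, mul_comm (g z), hgz] at hlim
  refine hlim.congr fun R => ?_
  rw [← intervalIntegral.integral_const_mul, ← intervalIntegral.integral_add]
  · refine intervalIntegral.integral_congr fun t _ => ?_
    simp only
    rw [hf_eq _ (sub_ne_zero.1 (hne t)), ← hgz]
    have h1 := hne t
    have h2 := hadd ((t : ℂ) + Complex.I * (h : ℂ)) (by rw [him]; exact hh)
    simp only [← hw_def, sub_add_cancel, hg_def]
    generalize (t : ℂ) + Complex.I * (h : ℂ) = ρ at h1 h2 ⊢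
    rw [← neg_sub (ρ ^ 2), sq_sub_sq]
    field_simp
  · exact (hf.continuousOn.comp_continuous hline fun t => (him t).ge).intervalIntegrable _ _
  · refine Continuous.intervalIntegrable (continuous_const.mul ?_) _ _
    exact (hline.sub continuous_const).inv₀ hne |>.sub
      ((hline.sub continuous_const).inv₀ fun t => hsub_w _ (him t).ge)
end
end

section
/- Growth of order 1/2 of the series solutions: for j = 1,2 there exists a constant K > 0 such that for all x ≠ a and all ρ ∈ ℂ, |C_j(x,ρ²)| ≤ K |x−a|^{Re μ_j} e^{πν''} e^{K|ρ||x−a|} (where ν'' accounts for the branch factor in (x−a)^{μ_j}); in particular, for each fixed x ≠ a the map λ ↦ C_j(x,λ) is an entire function of λ of order at most 1/2. -/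
open Complex Set Filter MeasureTheory

noncomputable section

/-- If `n + τ` vanishes for no positive integer `n`, then `n ≤ M ‖n + τ‖` for some constant `M`. -/
lemma exists_le_mul_norm_add (τ : ℂ) (hτ : ∀ s : ℕ, (s : ℂ) + 1 + τ ≠ 0) :
    ∃ M > (0 : ℝ), ∀ s : ℕ, (s : ℝ) + 1 ≤ M * ‖(s : ℂ) + 1 + τ‖ := by
  have hinv : Tendsto (fun s : ℕ => τ / ((s : ℂ) + 1)) atTop (nhds 0) := by
    simpa [div_eq_mul_inv] using
      (tendsto_one_div_add_atTop_nhds_zero_nat (𝕜 := ℂ)).const_mul τ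
  have hlim : Tendsto (fun s : ℕ => ‖1 + τ / ((s : ℂ) + 1)‖⁻¹) atTop (nhds 1) := by
    have h := ((tendsto_const_nhds (x := (1 : ℂ))).add hinv).norm
    simpa using h.inv₀ (by simp)
  obtain ⟨M, hM⟩ := hlim.bddAbove_range
  refine ⟨max M 1, by positivity, fun s => ?_⟩
  have hs : (s : ℂ) + 1 ≠ 0 := by exact_mod_cast s.succ_ne_zero
  have hns : ‖(s : ℂ) + 1‖ = (s : ℝ) + 1 := by
    exact_mod_cast Complex.norm_natCast (s + 1)
  have hle : ‖1 + τ / ((s : ℂ) + 1)‖⁻¹ ≤ max M 1 := (hM ⟨s, rfl⟩).trans (le_max_left _ _)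
  have heq : (1 : ℂ) + τ / ((s : ℂ) + 1) = ((s : ℂ) + 1 + τ) / ((s : ℂ) + 1) := by
    field_simp
  have hpos : 0 < ‖(s : ℂ) + 1 + τ‖ := norm_pos_iff.mpr (hτ s)
  rw [heq, norm_div, hns, inv_div, div_le_iff₀ hpos] at hle
  exact hle

lemma exists_norm_coefC_le (ν₀ μ c0 τ : ℂ) (hτ : ∀ s : ℕ, (s : ℂ) + 1 + τ ≠ 0)
    (hμ : μ = τ + 1 / 2) (hν₀ : ν₀ = τ ^ 2 - 1 / 4) :
    ∃ D > (0 : ℝ), ∀ k : ℕ, ‖coefC ν₀ μ c0 k‖ ≤ ‖c0‖ * (D ^ k / k.factorial) ^ 2 := by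
  obtain ⟨M, hM0, hM⟩ := exists_le_mul_norm_add τ hτ
  refine ⟨√M, Real.sqrt_pos.mpr hM0, fun k => ?_⟩
  have hfactor (s : ℕ) : (2 * ((s : ℂ) + 1) + μ) * (2 * ((s : ℂ) + 1) + μ - 1) - ν₀ =
      4 * ((s : ℂ) + 1) * ((s : ℂ) + 1 + τ) := by
    rw [hμ, hν₀]; ring
  have hprod : ((k.factorial : ℝ)) ^ 2 ≤
      M ^ k * ‖∏ s ∈ Finset.range k, (4 * ((s : ℂ) + 1) * ((s : ℂ) + 1 + τ))‖ := by
    induction k with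
    | zero => simp
    | succ k ih =>
      have hns : ‖(k : ℂ) + 1‖ = (k : ℝ) + 1 := by
        exact_mod_cast Complex.norm_natCast (k + 1)
      rw [Finset.prod_range_succ, Nat.factorial_succ]
      simp only [norm_mul, hns, Complex.norm_ofNat]
      push_cast
      have hstep : ((k : ℝ) + 1) ^ 2 ≤ M * (4 * ((k : ℝ) + 1) * ‖(k : ℂ) + 1 + τ‖) := by
        have hk : (0 : ℝ) < (k : ℝ) + 1 := by positivity
        nlinarith [mul_le_mul_of_nonneg_left (hM k) hk.le, mul_pos hk hk]
      calc (((k : ℝ) + 1) * k.factorial) ^ 2 = ((k : ℝ) + 1) ^ 2 * (k.factorial : ℝ) ^ 2 := by ring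
        _ ≤ _ := mul_le_mul hstep ih (by positivity) (by positivity)
        _ = _ := by ring
  have hpos : 0 < ‖∏ s ∈ Finset.range k, (4 * ((s : ℂ) + 1) * ((s : ℂ) + 1 + τ))‖ := by
    refine norm_pos_iff.mpr (Finset.prod_ne_zero_iff.mpr fun s _ => ?_)
    exact mul_ne_zero (mul_ne_zero (by norm_num) (by exact_mod_cast s.succ_ne_zero)) (hτ s)
  have hsq : (√M ^ k / (k.factorial : ℝ)) ^ 2 = M ^ k / (k.factorial : ℝ) ^ 2 := by
    rw [div_pow, ← pow_mul, mul_comm k 2, pow_mul, Real.sq_sqrt hM0.le]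
  simp only [coefC, hfactor]
  rw [hsq, norm_div, norm_mul, norm_pow, norm_neg, norm_one, one_pow, one_mul, div_eq_mul_inv]
  refine mul_le_mul_of_nonneg_left ?_ (norm_nonneg _)
  rw [inv_eq_one_div, div_le_div_iff₀ hpos (by positivity), one_mul]
  exact hprod

lemma summable_sq_pow_div_factorial {t : ℝ} (ht : 0 ≤ t) :
    Summable (fun k : ℕ => (t ^ k / (k.factorial : ℝ)) ^ 2) ∧
      ∑' k : ℕ, (t ^ k / (k.factorial : ℝ)) ^ 2 ≤ Real.exp (2 * t) := by
  have hle (k : ℕ) : (t ^ k / (k.factorial : ℝ)) ^ 2 ≤ Real.exp t * (t ^ k / k.factorial) := by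
    rw [sq]
    exact mul_le_mul_of_nonneg_right (Real.pow_div_factorial_le_exp t ht k) (by positivity)
  have hsum := (Real.summable_pow_div_factorial t).mul_left (Real.exp t)
  have hsq := Summable.of_nonneg_of_le (fun k => sq_nonneg _) hle hsum
  refine ⟨hsq, (hsq.tsum_le_tsum hle hsum).trans_eq ?_⟩
  rw [tsum_mul_left, two_mul, Real.exp_add, Real.exp_eq_exp_ℝ, NormedSpace.exp_eq_tsum_div]

section PowerSeries

variable {c : ℕ → ℂ} {A D : ℝ}

lemma norm_coeff_mul_pow_le
    (hc : ∀ k : ℕ, ‖c k‖ ≤ A * (D ^ k / k.factorial) ^ 2) {w : ℂ} {r : ℝ} (hw : ‖w‖ ≤ r) (k : ℕ) :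
    ‖c k * w ^ k‖ ≤ A * ((D * √r) ^ k / k.factorial) ^ 2 := by
  have hr : 0 ≤ r := (norm_nonneg w).trans hw
  have hsq : (√r ^ k) ^ 2 = r ^ k := by
    rw [← pow_mul, mul_comm k 2, pow_mul, Real.sq_sqrt hr]
  calc ‖c k * w ^ k‖ = ‖c k‖ * ‖w‖ ^ k := by rw [norm_mul, norm_pow]
    _ ≤ (A * (D ^ k / k.factorial) ^ 2) * r ^ k :=
      mul_le_mul (hc k) (pow_le_pow_left₀ (norm_nonneg _) hw k) (by positivity)
        ((norm_nonneg _).trans (hc k))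
    _ = _ := by rw [← hsq]; ring

lemma norm_tsum_coeff_mul_pow_le (hA : 0 ≤ A) (hD : 0 ≤ D)
    (hc : ∀ k : ℕ, ‖c k‖ ≤ A * (D ^ k / k.factorial) ^ 2) (w : ℂ) :
    ‖∑' k : ℕ, c k * w ^ k‖ ≤ A * Real.exp (2 * (D * √‖w‖)) := by
  obtain ⟨hs, hle⟩ := summable_sq_pow_div_factorial (mul_nonneg hD (Real.sqrt_nonneg ‖w‖))
  refine (tsum_of_norm_bounded (hs.mul_left A).hasSum
    (norm_coeff_mul_pow_le hc le_rfl)).trans ?_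
  rw [tsum_mul_left]
  exact mul_le_mul_of_nonneg_left hle hA

lemma differentiable_tsum_coeff_mul_pow (hD : 0 ≤ D)
    (hc : ∀ k : ℕ, ‖c k‖ ≤ A * (D ^ k / k.factorial) ^ 2) :
    Differentiable ℂ (fun w : ℂ => ∑' k : ℕ, c k * w ^ k) := by
  intro w
  have hs := (summable_sq_pow_div_factorial
    (mul_nonneg hD (Real.sqrt_nonneg (‖w‖ + 1)))).1.mul_left A
  have hdiff : DifferentiableOn ℂ (fun w : ℂ => ∑' k : ℕ, c k * w ^ k)
      (Metric.ball 0 (‖w‖ + 1)) :=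
    differentiableOn_tsum_of_summable_norm hs (fun k => by fun_prop) Metric.isOpen_ball
      (fun k z hz => norm_coeff_mul_pow_le hc (mem_ball_zero_iff.mp hz).le k)
  exact hdiff.differentiableAt (Metric.isOpen_ball.mem_nhds (by simp))

end PowerSeries

lemma norm_ofReal_cpow_le (y : ℝ) (μ : ℂ) :
    ‖(y : ℂ) ^ μ‖ ≤ |y| ^ μ.re * Real.exp (Real.pi * |μ.im|) := by
  refine (Complex.norm_cpow_le _ _).trans ?_
  rw [div_eq_mul_inv, ← Real.exp_neg, Complex.norm_real, Real.norm_eq_abs]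
  gcongr
  calc -(Complex.arg y * μ.im) ≤ |Complex.arg y * μ.im| := neg_le_abs _
    _ = |Complex.arg y| * |μ.im| := abs_mul _ _
    _ ≤ Real.pi * |μ.im| := by gcongr; exact Complex.abs_arg_le_pi _

/-- Growth bounds and holomorphy of `Cfun` for the exponent `μ = τ + 1/2`, where `ν₀ = τ² - 1/4`. -/
lemma Cfun_growth_and_differentiable (a : ℝ) (ν₀ μ c0 τ : ℂ)
    (hτ : ∀ s : ℕ, (s : ℂ) + 1 + τ ≠ 0) (hμ : μ = τ + 1 / 2) (hν₀ : ν₀ = τ ^ 2 - 1 / 4) :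
    (∃ K > (0 : ℝ), ∀ x : ℝ, x ≠ a → ∀ ρ : ℂ,
        ‖Cfun a ν₀ μ c0 x (ρ ^ 2)‖ ≤
          K * |x - a| ^ μ.re * Real.exp (Real.pi * |τ.im|) * Real.exp (K * ‖ρ‖ * |x - a|)) ∧
      (∀ x : ℝ, x ≠ a →
        Differentiable ℂ (fun lam => Cfun a ν₀ μ c0 x lam) ∧
        ∃ B > (0 : ℝ), ∀ lam : ℂ,
          ‖Cfun a ν₀ μ c0 x lam‖ ≤ B * Real.exp (B * ‖lam‖ ^ (1 / 2 : ℝ))) := by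
  obtain ⟨D, hD, hcoef⟩ := exists_norm_coefC_le ν₀ μ c0 τ hτ hμ hν₀
  have him : μ.im = τ.im := by simp [hμ]
  have hsqrt (x : ℝ) (lam : ℂ) :
      √‖lam * ((x : ℂ) - (a : ℂ)) ^ 2‖ = √‖lam‖ * |x - a| := by
    rw [norm_mul, norm_pow, ← Complex.ofReal_sub, Complex.norm_real, Real.norm_eq_abs,
      Real.sqrt_mul (norm_nonneg _), Real.sqrt_sq (abs_nonneg _)]
  have hbound (x : ℝ) (lam : ℂ) : ‖Cfun a ν₀ μ c0 x lam‖ ≤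
      ‖((x : ℂ) - (a : ℂ)) ^ μ‖ * (‖c0‖ * Real.exp (2 * (D * (√‖lam‖ * |x - a|)))) := by
    rw [Cfun, norm_mul, ← hsqrt]
    exact mul_le_mul_of_nonneg_left
      (norm_tsum_coeff_mul_pow_le (norm_nonneg _) hD.le hcoef _) (norm_nonneg _)
  refine ⟨⟨max ‖c0‖ (2 * D), lt_max_of_lt_right (by positivity), fun x _ ρ => ?_⟩, fun x _ => ⟨?_, ?_⟩⟩
  · have hcpow : ‖((x : ℂ) - (a : ℂ)) ^ μ‖ ≤
        |x - a| ^ μ.re * Real.exp (Real.pi * |τ.im|) := by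
      rw [← Complex.ofReal_sub, ← him]
      exact norm_ofReal_cpow_le _ _
    have hρ : √‖ρ ^ 2‖ = ‖ρ‖ := by rw [norm_pow, Real.sqrt_sq (norm_nonneg _)]
    have hexp : 2 * (D * (‖ρ‖ * |x - a|)) ≤ max ‖c0‖ (2 * D) * ‖ρ‖ * |x - a| := by
      rw [← mul_assoc, ← mul_assoc]
      gcongr
      exact le_max_right _ _
    refine (hbound x (ρ ^ 2)).trans ?_
    rw [hρ]
    calc _ ≤ (|x - a| ^ μ.re * Real.exp (Real.pi * |τ.im|)) * (max ‖c0‖ (2 * D) *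
          Real.exp (max ‖c0‖ (2 * D) * ‖ρ‖ * |x - a|)) := by
          gcongr
          exact le_max_left _ _
      _ = _ := by ring
  · exact ((differentiable_tsum_coeff_mul_pow hD.le hcoef).comp
      (differentiable_id.mul_const (((x : ℂ) - (a : ℂ)) ^ 2))).const_mul _
  · refine ⟨‖((x : ℂ) - (a : ℂ)) ^ μ‖ * ‖c0‖ + 2 * D * |x - a| + 1, by positivity,
      fun lam => (hbound x lam).trans ?_⟩
    rw [← Real.sqrt_eq_rpow, ← mul_assoc]
    refine mul_le_mul ?_ (Real.exp_le_exp.mpr ?_) (by positivity) (by positivity)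
    · nlinarith [mul_nonneg hD.le (abs_nonneg (x - a))]
    · have h : 0 ≤ (‖((x : ℂ) - (a : ℂ)) ^ μ‖ * ‖c0‖ + 1) * √‖lam‖ := by positivity
      nlinarith

/-- growth of order `1/2` of the series solutions: for `j = 1,2` there is
`K > 0` with `|C_j(x,ρ²)| ≤ K |x−a|^{Re μ_j} e^{πν''} e^{K|ρ||x−a|}` for all `x ≠ a`
and all `ρ ∈ ℂ` (here `ν'' = |Im ν|` accounts for the branch factor in `(x−a)^{μ_j}`);
in particular, for each fixed `x ≠ a` the map `λ ↦ C_j(x,λ)` is an entire function of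
`λ` of order at most `1/2`. -/
theorem series_solutions_order_one_half
    (a : ℝ) (ν ν₀ c10 c20 : ℂ)
    (ha : 0 < a)
    (hν : 0 < ν.re) (hνint : ∀ n : ℕ, 0 < n → ν ≠ (n : ℂ)) (hν₀ : ν₀ = ν ^ 2 - 1 / 4)
    (hc : c10 * c20 = 1 / (2 * ν)) (hc10 : c10 ≠ 0) (hc20 : c20 ≠ 0) :
    ∀ j : ℕ, j = 1 ∨ j = 2 →
      (∃ K > (0 : ℝ), ∀ x : ℝ, x ≠ a → ∀ ρ : ℂ,
        ‖Cfun a ν₀ (if j = 1 then -ν + 1 / 2 else ν + 1 / 2)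
            (if j = 1 then c10 else c20) x (ρ ^ 2)‖ ≤
          K * |x - a| ^ ((if j = 1 then -ν + 1 / 2 else ν + 1 / 2 : ℂ)).re *
            Real.exp (Real.pi * |ν.im|) * Real.exp (K * ‖ρ‖ * |x - a|)) ∧
      (∀ x : ℝ, x ≠ a →
        Differentiable ℂ (fun lam => Cfun a ν₀ (if j = 1 then -ν + 1 / 2 else ν + 1 / 2)
            (if j = 1 then c10 else c20) x lam) ∧
        ∃ B > (0 : ℝ), ∀ lam : ℂ,
          ‖Cfun a ν₀ (if j = 1 then -ν + 1 / 2 else ν + 1 / 2)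
              (if j = 1 then c10 else c20) x lam‖ ≤
            B * Real.exp (B * ‖lam‖ ^ (1 / 2 : ℝ))) := by
  rintro j (rfl | rfl)
  · have hτ (s : ℕ) : (s : ℂ) + 1 + -ν ≠ 0 := fun h =>
      hνint (s + 1) s.succ_pos (by push_cast; linear_combination -h)
    simpa using Cfun_growth_and_differentiable a ν₀ (-ν + 1 / 2) c10 (-ν) hτ rfl
      (by rw [hν₀]; ring)
  · have hτ (s : ℕ) : (s : ℂ) + 1 + ν ≠ 0 := fun h => by
      have hre : (s : ℝ) + 1 + ν.re = 0 := by simpa using congrArg Complex.re h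
      have hs : (0 : ℝ) ≤ s := s.cast_nonneg
      linarith
    simpa using Cfun_growth_and_differentiable a ν₀ (ν + 1 / 2) c20 ν hτ rfl hν₀
end
end
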